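/- arXiv:1209.6462 — 2 statements merged into one kernel-verified Lean document; each statement's English description precedes it below -/
import Mathlib

section
/- Let n ≥ 2, let e be an (n−2)-cell of the n-dimensional cubical grid, and let L be an L-block centered on e, regarded as a digital n-object. Then the number of free (n−1)-cells of L is c*_{n−1}(L) = 2(3n−2). -/
/-!
A free `(n-1)`-cell of a finite set `D` of voxels separates a unique voxel of `D` from a voxel
outside `D`, since the block of an `(n-1)`-cell has exactly two voxels (`block_face`). Hence the
free `(n-1)`-cells are in bijection with the pairs (voxel `w` of `D`, face of `w`) for which the
voxel across the face is not in `D` (`cStar_eq_card_exposed`).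

An `(n-2)`-cell `e` has exactly two even coordinates `a` and `b`, and the L-block obtained by
removing `v` consists of the reflections of `v` in direction `a`, in direction `b`, and in both
(`block_diff`). Its three voxels have `3 · 2n` faces in total, counted with multiplicity; the last
voxel shares one face with each of the other two, which do not share a face with each other. So
four (voxel, face) pairs are not exposed (`card_exposed_L`), leaving `6n - 4 = 2(3n - 2)`.
-/

namespace DigitalGeometry

/-- The dimension of a cell of the cubical grid (doubled coordinates):
the number of odd coordinates. -/
def cdim {n : ℕ} (c : Fin n → ℤ) : ℕ :=
  (Finset.univ.filter fun j => Odd (c j)).card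

/-- The bounding relation `e < f` between cells of the grid. -/
def Bounds {n : ℕ} (e f : Fin n → ℤ) : Prop :=
  cdim e < cdim f ∧ ∀ j, e j = f j ∨ (Odd (f j) ∧ |e j - f j| = 1)

/-- A voxel is an `n`-cell: all coordinates odd. -/
def IsVoxel {n : ℕ} (v : Fin n → ℤ) : Prop := ∀ j, Odd (v j)

/-- The `i`-block centered on an `i`-cell `e`: all voxels bounded by `e`. -/
def Block {n : ℕ} (e : Fin n → ℤ) : Set (Fin n → ℤ) :=
  {v | IsVoxel v ∧ Bounds e v}

/-- `Cells D i` : the `i`-cells of the object `D` (for `i < n` those bounding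
some voxel of `D`; for `i = n` it is `D` itself). -/
def Cells {n : ℕ} (D : Set (Fin n → ℤ)) (i : ℕ) : Set (Fin n → ℤ) :=
  {e | cdim e = i ∧ (e ∈ D ∨ ∃ v ∈ D, Bounds e v)}

/-- `c_i(D)` : the number of `i`-cells of `D`. -/
noncomputable def cCount {n : ℕ} (D : Set (Fin n → ℤ)) (i : ℕ) : ℕ := (Cells D i).ncard

/-- The free `i`-cells of `D`: those whose `i`-block is not contained in `D`. -/
def FreeCells {n : ℕ} (D : Set (Fin n → ℤ)) (i : ℕ) : Set (Fin n → ℤ) :=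
  {e | e ∈ Cells D i ∧ ¬ Block e ⊆ D}

/-- `c*_i(D)` : the number of free `i`-cells of `D`. -/
noncomputable def cStar {n : ℕ} (D : Set (Fin n → ℤ)) (i : ℕ) : ℕ := (FreeCells D i).ncard

/-- The non-free `i`-cells of `D`. -/
def NonFreeCells {n : ℕ} (D : Set (Fin n → ℤ)) (i : ℕ) : Set (Fin n → ℤ) :=
  {e | e ∈ Cells D i ∧ Block e ⊆ D}

/-- `c'_i(D)` : the number of non-free `i`-cells of `D`. -/
noncomputable def cPrime {n : ℕ} (D : Set (Fin n → ℤ)) (i : ℕ) : ℕ := (NonFreeCells D i).ncard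

/-- `InterCell v1 v2 e` : the intersection of the voxels `v1`, `v2`
(as subsets of `ℝ^n`) equals the cell `e`. -/
def InterCell {n : ℕ} (v1 v2 e : Fin n → ℤ) : Prop :=
  ∀ j, (v1 j = v2 j ∧ e j = v1 j) ∨
       (e j + 1 = max (v1 j) (v2 j) ∧ e j - 1 = min (v1 j) (v2 j))

/-- `e` is an `(n-2)`-hub of `D`, i.e. `D` has an `(n-2)`-gap over `e`. -/
def IsHub {n : ℕ} (D : Set (Fin n → ℤ)) (e : Fin n → ℤ) : Prop :=
  cdim e = n - 2 ∧ ∃ v1 v2 : Fin n → ℤ, v1 ≠ v2 ∧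
    Block e ∩ D = {v1, v2} ∧ InterCell v1 v2 e

/-- `g_{n-2}(D)` : the number of `(n-2)`-gaps of `D`. -/
noncomputable def gapCount {n : ℕ} (D : Set (Fin n → ℤ)) : ℕ := {e | IsHub D e}.ncard

/-- `b_j(e, D)` : the number of free `j`-cells of `D` bounded by `e`. -/
noncomputable def bcount {n : ℕ} (e : Fin n → ℤ) (D : Set (Fin n → ℤ)) (j : ℕ) : ℕ :=
  {f | f ∈ FreeCells D j ∧ Bounds e f}.ncard

/-- Two voxels are `i`-adjacent if they are distinct and their intersection
contains an `i`-cell. -/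
def Adj {n : ℕ} (i : ℕ) (v1 v2 : Fin n → ℤ) : Prop :=
  v1 ≠ v2 ∧ ∃ e : Fin n → ℤ, cdim e = i ∧ Bounds e v1 ∧ Bounds e v2

lemma cdim_add_even {n : ℕ} (f : Fin n → ℤ) :
    cdim f + (Finset.univ.filter fun j => ¬ Odd (f j)).card = n := by
  have h := Finset.card_filter_add_card_filter_not (s := (Finset.univ : Finset (Fin n)))
    (fun j => Odd (f j))
  simpa [cdim] using h

lemma cdim_voxel {n : ℕ} {w : Fin n → ℤ} (hw : IsVoxel w) : cdim w = n := by
  have h : (Finset.univ.filter fun j => Odd (w j)) = Finset.univ :=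
    Finset.filter_true_of_mem fun j _ => hw j
  simp [cdim, h]

/-- An `(n-1)`-cell has exactly one even coordinate, the direction it is orthogonal to. -/
lemma facet_iff {n : ℕ} (hn : 1 ≤ n) (f : Fin n → ℤ) :
    cdim f = n - 1 ↔ ∃ k, ∀ j, ¬ Odd (f j) ↔ j = k := by
  have h := cdim_add_even f
  have h1 : cdim f = n - 1 ↔ (Finset.univ.filter fun j => ¬ Odd (f j)).card = 1 := by omega
  rw [h1, Finset.card_eq_one]
  simp only [Finset.ext_iff, Finset.mem_filter, Finset.mem_univ, true_and, Finset.mem_singleton]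

/-- An `(n-2)`-cell has exactly two even coordinates. -/
lemma ridge_coords {n : ℕ} (hn : 2 ≤ n) (e : Fin n → ℤ) (he : cdim e = n - 2) :
    ∃ a b, a ≠ b ∧ ∀ j, ¬ Odd (e j) ↔ j = a ∨ j = b := by
  have h := cdim_add_even e
  have h1 : (Finset.univ.filter fun j => ¬ Odd (e j)).card = 2 := by omega
  obtain ⟨a, b, hab, h2⟩ := Finset.card_eq_two.1 h1
  refine ⟨a, b, hab, fun j => ?_⟩
  have h3 := Finset.ext_iff.1 h2 j
  simpa only [Finset.mem_filter, Finset.mem_univ, true_and, Finset.mem_insert,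
    Finset.mem_singleton] using h3

/-- A cell that is not a voxel bounds a voxel exactly when it agrees with it in its odd
coordinates and is at distance one in its even coordinates. -/
lemma bounds_voxel_iff {n : ℕ} {f w : Fin n → ℤ} (hf : cdim f < n) (hw : IsVoxel w) :
    Bounds f w ↔ ∀ j, (Odd (f j) → w j = f j) ∧
      (¬ Odd (f j) → w j = f j + 1 ∨ w j = f j - 1) := by
  unfold Bounds
  rw [cdim_voxel hw]
  simp only [hf, true_and]
  refine forall_congr' fun j => ?_
  have hwj := hw j
  simp only [Int.odd_iff] at hwj ⊢
  rw [abs_eq (by norm_num)]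
  omega

/-- The face of the voxel `w` orthogonal to direction `k`, on the side given by the sign `σ`. -/
def face {n : ℕ} (p : (Fin n → ℤ) × Fin n × ℤ) : Fin n → ℤ :=
  Function.update p.1 p.2.1 (p.1 p.2.1 + p.2.2)

/-- The voxel on the other side of the face `face (w, k, σ)` of `w`. -/
def across {n : ℕ} (p : (Fin n → ℤ) × Fin n × ℤ) : Fin n → ℤ :=
  Function.update p.1 p.2.1 (p.1 p.2.1 + 2 * p.2.2)

/-- The pairs of a voxel of `D` and one of its faces such that the voxel across that face
is missing from `D`. -/
def exposed {n : ℕ} (D : Finset (Fin n → ℤ)) : Finset ((Fin n → ℤ) × Fin n × ℤ) :=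
  (D ×ˢ Finset.univ ×ˢ {1, -1}).filter fun p => across p ∉ D

lemma mem_exposed {n : ℕ} {D : Finset (Fin n → ℤ)} {w : Fin n → ℤ} {k : Fin n} {σ : ℤ} :
    (w, k, σ) ∈ exposed D ↔ w ∈ D ∧ (σ = 1 ∨ σ = -1) ∧ across (w, k, σ) ∉ D := by
  simp [exposed, and_assoc]

lemma face_odd_iff {n : ℕ} {w : Fin n → ℤ} (hw : IsVoxel w) (k : Fin n) {σ : ℤ}
    (hσ : σ = 1 ∨ σ = -1) (j : Fin n) : ¬ Odd (face (w, k, σ) j) ↔ j = k := by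
  by_cases h : j = k
  · subst h
    have hwj := Int.odd_iff.1 (hw j)
    have hf : face (w, j, σ) j = w j + σ := by simp [face]
    rw [hf, Int.odd_iff]
    simp only [iff_true]
    omega
  · have hf : face (w, k, σ) j = w j := by simp [face, h]
    rw [hf]
    exact ⟨fun h' => absurd (hw j) h', fun h' => absurd h' h⟩

lemma cdim_face {n : ℕ} (hn : 1 ≤ n) {w : Fin n → ℤ} (hw : IsVoxel w) (k : Fin n) {σ : ℤ}
    (hσ : σ = 1 ∨ σ = -1) : cdim (face (w, k, σ)) = n - 1 :=
  (facet_iff hn _).2 ⟨k, face_odd_iff hw k hσ⟩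

/-- The block of a face of `w` consists of `w` and the voxel across that face. -/
lemma block_face {n : ℕ} (hn : 1 ≤ n) {w : Fin n → ℤ} (hw : IsVoxel w) (k : Fin n) {σ : ℤ}
    (hσ : σ = 1 ∨ σ = -1) : Block (face (w, k, σ)) = {w, across (w, k, σ)} := by
  have hc : cdim (face (w, k, σ)) < n := by rw [cdim_face hn hw k hσ]; omega
  have hodd := face_odd_iff hw k hσ
  have hk : face (w, k, σ) k = w k + σ := by simp [face]
  have hne : ∀ j, j ≠ k → face (w, k, σ) j = w j := fun j hj => by simp [face, hj]
  ext u
  simp only [Block, Set.mem_ofPred_eq, Set.mem_insert_iff, Set.mem_singleton_iff]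
  constructor
  · rintro ⟨hu, hb⟩
    rw [bounds_voxel_iff hc hu] at hb
    have hoff : ∀ j, j ≠ k → u j = w j := fun j hj => by
      rw [← hne j hj]
      exact (hb j).1 (not_not.1 fun h => hj ((hodd j).1 h))
    have hat := (hb k).2 ((hodd k).2 rfl)
    rw [hk] at hat
    have hat2 : u k = w k ∨ u k = w k + 2 * σ := by omega
    rcases hat2 with h | h
    · left
      ext j
      by_cases hj : j = k
      · rw [hj, h]
      · exact hoff j hj
    · right
      ext j
      by_cases hj : j = k
      · rw [hj, h]; simp [across]
      · rw [hoff j hj]; simp [across, hj]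
  · have key : ∀ u : Fin n → ℤ, (u k = w k ∨ u k = w k + 2 * σ) → (∀ j, j ≠ k → u j = w j) →
        IsVoxel u ∧ Bounds (face (w, k, σ)) u := by
      intro u h1 h2
      have hu : IsVoxel u := by
        intro j
        have hwj := hw j
        by_cases hj : j = k
        · subst hj
          rw [Int.odd_iff] at *
          omega
        · rwa [h2 j hj]
      refine ⟨hu, (bounds_voxel_iff hc hu).2 fun j => ?_⟩
      by_cases hj : j = k
      · subst hj
        refine ⟨fun h => absurd h ((hodd j).2 rfl), fun _ => ?_⟩
        rw [hk]
        omega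
      · refine ⟨fun _ => by rw [h2 j hj, hne j hj], fun h => absurd ((hodd j).1 h) hj⟩
    rintro (rfl | rfl)
    · exact key _ (Or.inl rfl) fun _ _ => rfl
    · exact key _ (Or.inr (by simp [across])) fun j hj => by simp [across, hj]

/-- Every `(n-1)`-cell bounding a voxel `w` is one of the faces of `w`. -/
lemma exists_face {n : ℕ} (hn : 1 ≤ n) {f w : Fin n → ℤ} (hf : cdim f = n - 1)
    (hw : IsVoxel w) (hb : Bounds f w) : ∃ k σ, (σ = 1 ∨ σ = -1) ∧ f = face (w, k, σ) := by
  obtain ⟨k, hk⟩ := (facet_iff hn f).1 hf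
  rw [bounds_voxel_iff (by omega) hw] at hb
  refine ⟨k, f k - w k, ?_, ?_⟩
  · have := (hb k).2 ((hk k).2 rfl)
    omega
  · ext j
    by_cases hj : j = k
    · subst hj; simp [face]
    · rw [← (hb j).1 (not_not.1 fun h => hj ((hk j).1 h))]
      simp [face, hj]

/-- Each free `(n-1)`-cell lies on one voxel of `D` and is missing the one across, so it
corresponds to an exposed (voxel, face) pair. -/
lemma freeCells_eq_image {n : ℕ} (hn : 1 ≤ n) (D : Finset (Fin n → ℤ))
    (hD : ∀ w ∈ D, IsVoxel w) :
    FreeCells (D : Set (Fin n → ℤ)) (n - 1) = face '' (exposed D : Set _) := by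
  ext f
  constructor
  · rintro ⟨⟨hf, hmem⟩, hfree⟩
    have : ∃ w ∈ D, Bounds f w := by
      rcases hmem with h | ⟨w, hw, hb⟩
      · have := cdim_voxel (hD f h)
        omega
      · exact ⟨w, hw, hb⟩
    obtain ⟨w, hw, hb⟩ := this
    obtain ⟨k, σ, hσ, rfl⟩ := exists_face hn hf (hD w hw) hb
    refine ⟨(w, k, σ), mem_exposed.2 ⟨hw, hσ, fun h => hfree ?_⟩, rfl⟩
    rw [block_face hn (hD w hw) k hσ]
    rintro u (rfl | rfl)
    exacts [hw, h]
  · rintro ⟨⟨w, k, σ⟩, hp, rfl⟩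
    obtain ⟨hw, hσ, hacr⟩ := mem_exposed.1 hp
    have hB := block_face hn (hD w hw) k hσ
    have hwB : w ∈ Block (face (w, k, σ)) := by rw [hB]; simp
    refine ⟨⟨cdim_face hn (hD w hw) k hσ, Or.inr ⟨w, hw, hwB.2⟩⟩, fun h => hacr (h ?_)⟩
    rw [hB]; simp

lemma face_injOn {n : ℕ} (hn : 1 ≤ n) (D : Finset (Fin n → ℤ)) (hD : ∀ w ∈ D, IsVoxel w) :
    Set.InjOn face (exposed D : Set ((Fin n → ℤ) × Fin n × ℤ)) := by
  rintro ⟨w, k, σ⟩ hp ⟨w', k', σ'⟩ hp' h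
  obtain ⟨hw, hσ, hacr⟩ := mem_exposed.1 hp
  obtain ⟨hw', hσ', hacr'⟩ := mem_exposed.1 hp'
  have hk : k = k' := by
    rw [← face_odd_iff (hD w' hw') k' hσ', ← h, face_odd_iff (hD w hw) k hσ]
  subst hk
  -- `w'` lies in the two-element block of the common face, and the other voxel is not in `D`.
  have hmem : w' ∈ Block (face (w, k, σ)) := by
    rw [h, block_face hn (hD w' hw') k hσ']; simp
  rw [block_face hn (hD w hw) k hσ] at hmem
  rcases hmem with rfl | rfl
  · have := congrFun h k
    simp only [face, Function.update_self] at this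
    simp only [Prod.mk.injEq, true_and]
    omega
  · exact absurd hw' hacr

lemma cStar_eq_card_exposed {n : ℕ} (hn : 1 ≤ n) (D : Finset (Fin n → ℤ))
    (hD : ∀ w ∈ D, IsVoxel w) : cStar (D : Set (Fin n → ℤ)) (n - 1) = (exposed D).card := by
  rw [cStar, freeCells_eq_image hn D hD, (face_injOn hn D hD).ncard_image,
    Set.ncard_coe_finset]

/-- The two even directions of `e` and a voxel `v` of its block determine the other three voxels
of the block: reflect `v` in direction `a`, in direction `b`, or in both. -/
lemma block_diff {n : ℕ} (e v : Fin n → ℤ) (a b : Fin n) (hab : a ≠ b) (he : cdim e < n)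
    (hodd : ∀ j, ¬ Odd (e j) ↔ j = a ∨ j = b) (hv : v ∈ Block e) (s t : ℤ)
    (hs : s = e a - v a) (ht : t = e b - v b) :
    Block e \ {v} = (({across (v, a, s), across (v, b, t),
      across (across (v, a, s), b, t)} : Finset (Fin n → ℤ)) : Set (Fin n → ℤ)) := by
  obtain ⟨hvox, hvb⟩ := hv
  rw [bounds_voxel_iff he hvox] at hvb
  have hva := (hvb a).2 ((hodd a).2 (Or.inl rfl))
  have hvb' := (hvb b).2 ((hodd b).2 (Or.inr rfl))
  have hvo : ∀ j, j ≠ a → j ≠ b → Odd (e j) := fun j h1 h2 =>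
    not_not.1 fun h => by rcases (hodd j).1 h with h | h <;> contradiction
  have key : ∀ u : Fin n → ℤ, u ∈ Block e ↔ (u a = v a ∨ u a = v a + 2 * s) ∧
      (u b = v b ∨ u b = v b + 2 * t) ∧ ∀ j, j ≠ a → j ≠ b → u j = v j := by
    intro u
    constructor
    · rintro ⟨hu, hb⟩
      rw [bounds_voxel_iff he hu] at hb
      have h1 := (hb a).2 ((hodd a).2 (Or.inl rfl))
      have h2 := (hb b).2 ((hodd b).2 (Or.inr rfl))
      refine ⟨by omega, by omega, fun j hj1 hj2 => ?_⟩
      rw [(hb j).1 (hvo j hj1 hj2), (hvb j).1 (hvo j hj1 hj2)]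
    · rintro ⟨h1, h2, h3⟩
      have hu : IsVoxel u := by
        intro j
        have := hvox j
        by_cases hja : j = a
        · subst hja; rw [Int.odd_iff] at *; omega
        by_cases hjb : j = b
        · subst hjb; rw [Int.odd_iff] at *; omega
        rwa [h3 j hja hjb]
      refine ⟨hu, (bounds_voxel_iff he hu).2 fun j => ?_⟩
      by_cases hja : j = a
      · subst hja
        exact ⟨fun h => absurd h ((hodd j).2 (Or.inl rfl)), fun _ => by omega⟩
      by_cases hjb : j = b
      · subst hjb
        exact ⟨fun h => absurd h ((hodd j).2 (Or.inr rfl)), fun _ => by omega⟩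
      rw [h3 j hja hjb]
      exact hvb j
  have ext3 : ∀ u w : Fin n → ℤ,
      u = w ↔ u a = w a ∧ u b = w b ∧ ∀ j, j ≠ a → j ≠ b → u j = w j := by
    intro u w
    refine ⟨fun h => by simp [h], fun ⟨h1, h2, h3⟩ => funext fun j => ?_⟩
    by_cases hja : j = a
    · rw [hja, h1]
    by_cases hjb : j = b
    · rw [hjb, h2]
    exact h3 j hja hjb
  have o1 : ∀ j, j ≠ a → j ≠ b → across (v, a, s) j = v j := fun j h1 h2 => by
    simp [across, h1]
  have o2 : ∀ j, j ≠ a → j ≠ b → across (v, b, t) j = v j := fun j h1 h2 => by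
    simp [across, h2]
  have o3 : ∀ j, j ≠ a → j ≠ b → across (across (v, a, s), b, t) j = v j := fun j h1 h2 => by
    simp [across, h1, h2]
  have a1 : across (v, a, s) a = v a + 2 * s := by simp [across]
  have a2 : across (v, b, t) a = v a := by simp [across, hab]
  have a3 : across (across (v, a, s), b, t) a = v a + 2 * s := by simp [across, hab]
  have b1 : across (v, a, s) b = v b := by simp [across, hab.symm]
  have b2 : across (v, b, t) b = v b + 2 * t := by simp [across]
  have b3 : across (across (v, a, s), b, t) b = v b + 2 * t := by simp [across, hab.symm]
  ext u
  simp only [Set.mem_sdiff, Set.mem_singleton_iff, Finset.coe_insert, Finset.coe_singleton,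
    Set.mem_insert_iff]
  rw [key, ext3 u v, ext3 u (across (v, a, s)), ext3 u (across (v, b, t)),
    ext3 u (across (across (v, a, s), b, t)), a1, a2, a3, b1, b2, b3]
  have e1 : (∀ j, j ≠ a → j ≠ b → u j = across (v, a, s) j) ↔
      ∀ j, j ≠ a → j ≠ b → u j = v j := by
    refine forall_congr' fun j => forall_congr' fun h1 => forall_congr' fun h2 => ?_
    rw [o1 j h1 h2]
  have e2 : (∀ j, j ≠ a → j ≠ b → u j = across (v, b, t) j) ↔
      ∀ j, j ≠ a → j ≠ b → u j = v j := by
    refine forall_congr' fun j => forall_congr' fun h1 => forall_congr' fun h2 => ?_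
    rw [o2 j h1 h2]
  have e3 : (∀ j, j ≠ a → j ≠ b → u j = across (across (v, a, s), b, t) j) ↔
      ∀ j, j ≠ a → j ≠ b → u j = v j := by
    refine forall_congr' fun j => forall_congr' fun h1 => forall_congr' fun h2 => ?_
    rw [o3 j h1 h2]
  rw [e1, e2, e3]
  by_cases hall : ∀ j, j ≠ a → j ≠ b → u j = v j
  · simp only [iff_true_intro hall, and_true]
    omega
  · simp only [iff_false_intro hall, and_false, false_and, or_self]

/-- Of the `3 · 2n` (voxel, face) pairs of an L-shaped triple, exactly four are not exposed: the
two faces shared inside the triple, each seen from both of its sides. -/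
lemma card_exposed_L {n : ℕ} (v : Fin n → ℤ) (a b : Fin n) (hab : a ≠ b) (s t : ℤ)
    (hs : s = 1 ∨ s = -1) (ht : t = 1 ∨ t = -1) :
    (exposed ({across (v, a, s), across (v, b, t),
      across (across (v, a, s), b, t)} : Finset (Fin n → ℤ))).card + 4 = 3 * (n * 2) := by
  have a1 : across (v, a, s) a = v a + 2 * s := by simp [across]
  have a2 : across (v, b, t) a = v a := by simp [across, hab]
  have a3 : across (across (v, a, s), b, t) a = v a + 2 * s := by simp [across, hab]
  have b1 : across (v, a, s) b = v b := by simp [across, hab.symm]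
  have b2 : across (v, b, t) b = v b + 2 * t := by simp [across]
  have b3 : across (across (v, a, s), b, t) b = v b + 2 * t := by simp [across, hab.symm]
  have r1 : across (across (across (v, a, s), b, t), b, -t) = across (v, a, s) := by
    simp [across, hab.symm]
  have r2 : across (across (v, b, t), a, s) = across (across (v, a, s), b, t) := by
    simp only [across, Function.update_of_ne hab, Function.update_of_ne hab.symm]
    rw [Function.update_comm hab]
  have r3 : across (across (across (v, a, s), b, t), a, -s) = across (v, b, t) := by
    rw [← r2]
    simp [across, hab]
  set w1 := across (v, a, s) with hw1
  set w2 := across (v, b, t) with hw2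
  set w3 := across (w1, b, t) with hw3
  clear_value w3 w2 w1
  have h12 : w1 ≠ w2 := fun h => by have := congrFun h a; omega
  have h13 : w1 ≠ w3 := fun h => by have := congrFun h b; omega
  have h23 : w2 ≠ w3 := fun h => by have := congrFun h a; omega
  -- Crossing a face changes exactly one coordinate, so the two voxels determine its direction and sign.
  have off : ∀ (w : Fin n → ℤ) (k : Fin n) (σ : ℤ) (j : Fin n), j ≠ k →
      across (w, k, σ) j = w j := fun w k σ j hj => by simp [across, hj]
  have onAxis : ∀ (w : Fin n → ℤ) (k : Fin n) (σ : ℤ), across (w, k, σ) k = w k + 2 * σ :=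
    fun w k σ => by simp [across]
  have inj : ∀ (w : Fin n → ℤ) (k k' : Fin n) (σ σ' : ℤ), σ' ≠ 0 →
      across (w, k, σ) = across (w, k', σ') → k = k' ∧ σ = σ' := by
    intro w k k' σ σ' h0 h
    have hk : k = k' := by
      by_contra hk
      have := congrFun h k'
      rw [off w k σ k' (Ne.symm hk), onAxis] at this
      omega
    subst hk
    have := congrFun h k
    rw [onAxis, onAxis] at this
    exact ⟨rfl, by omega⟩
  have self : ∀ (w : Fin n → ℤ) (k : Fin n) (σ : ℤ), σ ≠ 0 → across (w, k, σ) ≠ w := by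
    intro w k σ h0 h
    have := congrFun h k
    rw [onAxis] at this
    omega
  -- Voxels differing in both coordinates `a` and `b`, such as `w1` and `w2`, share no face.
  have two : ∀ (w w' : Fin n → ℤ) (k : Fin n) (σ : ℤ), w a ≠ w' a → w b ≠ w' b →
      across (w, k, σ) ≠ w' := by
    intro w w' k σ ha hb h
    by_cases hk : a = k
    · apply hb
      rw [← h, off _ _ _ _ (hk ▸ hab.symm)]
    · apply ha
      rw [← h, off _ _ _ _ hk]
  set D : Finset (Fin n → ℤ) := {w1, w2, w3} with hDdef
  set bad : Finset ((Fin n → ℤ) × Fin n × ℤ) :=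
    {(w1, b, t), (w3, b, -t), (w2, a, s), (w3, a, -s)} with hbad
  have hbadcard : bad.card = 4 := by
    rw [hbad, Finset.card_insert_of_notMem, Finset.card_insert_of_notMem,
      Finset.card_insert_of_notMem, Finset.card_singleton] <;>
    simp [h12, h13, h23, h23.symm, hab.symm]
  have hDcard : D.card = 3 := Finset.card_eq_three.2 ⟨w1, w2, w3, h12, h13, h23, rfl⟩
  have hfilter : (D ×ˢ (Finset.univ : Finset (Fin n)) ×ˢ ({1, -1} : Finset ℤ)).filter
      (fun p => ¬ across p ∉ D) = bad := by
    ext ⟨w, k, σ⟩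
    simp only [Finset.mem_filter, Finset.mem_product, Finset.mem_univ, true_and, not_not,
      Finset.mem_insert, Finset.mem_singleton, hDdef, hbad, Prod.mk.injEq]
    constructor
    · rintro ⟨⟨hw, hσ⟩, hacr⟩
      have hσ0 : σ ≠ 0 := by omega
      rcases hw with rfl | rfl | rfl
      · rcases hacr with h | h | h
        · exact absurd h (self _ _ _ hσ0)
        · exact absurd h (two _ _ _ _ (by omega) (by omega))
        · have := inj _ _ _ _ _ (by omega) (h.trans hw3)
          exact Or.inl ⟨rfl, this.1, this.2⟩
      · rcases hacr with h | h | h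
        · exact absurd h (two _ _ _ _ (by omega) (by omega))
        · exact absurd h (self _ _ _ hσ0)
        · have := inj _ _ _ _ _ (by omega) (h.trans r2.symm)
          exact Or.inr (Or.inr (Or.inl ⟨rfl, this.1, this.2⟩))
      · rcases hacr with h | h | h
        · have := inj _ _ _ _ _ (by omega) (h.trans r1.symm)
          exact Or.inr (Or.inl ⟨rfl, this.1, this.2⟩)
        · have := inj _ _ _ _ _ (by omega) (h.trans r3.symm)
          exact Or.inr (Or.inr (Or.inr ⟨rfl, this.1, this.2⟩))
        · exact absurd h (self _ _ _ hσ0)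
    · rintro (⟨rfl, rfl, rfl⟩ | ⟨rfl, rfl, rfl⟩ | ⟨rfl, rfl, rfl⟩ | ⟨rfl, rfl, rfl⟩)
      · exact ⟨⟨Or.inl rfl, ht⟩, Or.inr (Or.inr hw3.symm)⟩
      · exact ⟨⟨Or.inr (Or.inr rfl), by omega⟩, Or.inl r1⟩
      · exact ⟨⟨Or.inr (Or.inl rfl), hs⟩, Or.inr (Or.inr r2)⟩
      · exact ⟨⟨Or.inr (Or.inr rfl), by omega⟩, Or.inr (Or.inl r3)⟩
  have hsum := Finset.card_filter_add_card_filter_not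
    (s := D ×ˢ (Finset.univ : Finset (Fin n)) ×ˢ ({1, -1} : Finset ℤ)) (fun p => across p ∉ D)
  rw [hfilter, hbadcard, Finset.card_product, Finset.card_product, hDcard, Finset.card_univ,
    Fintype.card_fin] at hsum
  simpa [exposed] using hsum

/-- The number of free `(n-1)`-cells of an `L`-block centered on an
`(n-2)`-cell `e` is `2(3n-2)`. -/
theorem free_cells_of_Lblock (n : ℕ) (hn : 2 ≤ n) (e : Fin n → ℤ)
    (he : cdim e = n - 2) (v : Fin n → ℤ) (hv : v ∈ Block e) :
    cStar (Block e \ {v}) (n - 1) = 2 * (3 * n - 2) := by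
  obtain ⟨a, b, hab, hodd⟩ := ridge_coords hn e he
  have hlt : cdim e < n := by omega
  have hb := (bounds_voxel_iff hlt hv.1).1 hv.2
  have ha1 := (hb a).2 ((hodd a).2 (Or.inl rfl))
  have hb1 := (hb b).2 ((hodd b).2 (Or.inr rfl))
  have hL := block_diff e v a b hab hlt hodd hv _ _ rfl rfl
  have hcard := card_exposed_L v a b hab (e a - v a) (e b - v b) (by omega) (by omega)
  rw [hL, cStar_eq_card_exposed (by omega)]
  · omega
  · intro w hw
    have hw' : w ∈ Block e \ {v} := by rw [hL]; exact hw
    exact hw'.1.1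

end DigitalGeometry
end

section
/- Let n ≥ 2, let D be a digital n-object, and let 0 ≤ i < j ≤ n−1. Then the sum, over all free i-cells e of D, of b_j(e, D) equals 2^{j−i}·binom(j, i)·c*_j(D), i.e. ∑_{e ∈ bd_i(D)} b_j(e, D) = c_{i→j}·c*_j(D) where c_{i→j} = 2^{j−i}·binom(j, i). -/
/-!
The sum is a double count of the pairs `(e, f)` with `e` a free `i`-cell, `f` a free `j`-cell and
`e < f`. By transitivity of the bounding relation (`Bounds.trans`), every `i`-cell bounding a free
`j`-cell is itself free (`mem_freeCells_of_bounds`), so each free `f` occurs in exactly as many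
pairs as it has `i`-faces. That number is `2 ^ (j - i) * binom j i` (`card_faces`): choose which
`i` of the `j` odd coordinates of `f` stay odd, and move each of the other `j - i` by `±1`.
-/

namespace DigitalGeometry

/-- The bounding relation is transitive: two successive coordinate changes cannot occur at the
same index, since the intermediate coordinate would have to be both odd and even. -/
lemma Bounds.trans {n : ℕ} {e f v : Fin n → ℤ} (h : Bounds e f) (h' : Bounds f v) :
    Bounds e v := by
  refine ⟨h.1.trans h'.1, fun k => ?_⟩
  rcases h.2 k with h1 | ⟨h1, h2⟩
  · rw [h1]; exact h'.2 k
  · rcases h'.2 k with h3 | ⟨h3, h4⟩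
    · rw [← h3]; exact Or.inr ⟨h1, h2⟩
    · exfalso
      obtain ⟨a, ha⟩ := h1
      obtain ⟨b, hb⟩ := h3
      rcases abs_eq (zero_le_one) |>.1 h4 with h5 | h5 <;> omega

lemma finite_bounds {n : ℕ} (v : Fin n → ℤ) : {e | Bounds e v}.Finite := by
  refine (Set.finite_Icc (v - 1) (v + 1)).subset fun e he => ?_
  have key : ∀ k, v k - 1 ≤ e k ∧ e k ≤ v k + 1 := fun k => by
    rcases he.2 k with h | ⟨-, h⟩
    · omega
    · have := abs_le.1 h.le
      omega
  exact ⟨fun k => (key k).1, fun k => (key k).2⟩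

lemma finite_freeCells {n : ℕ} {D : Set (Fin n → ℤ)} (hfin : D.Finite) (i : ℕ) :
    (FreeCells D i).Finite := by
  refine (hfin.union (hfin.biUnion fun v _ => finite_bounds v)).subset ?_
  rintro e ⟨⟨-, h | ⟨v, hv, hb⟩⟩, -⟩
  · exact Or.inl h
  · exact Or.inr (Set.mem_biUnion hv hb)

lemma cdim_of_isVoxel {n : ℕ} {v : Fin n → ℤ} (hv : IsVoxel v) : cdim v = n := by
  rw [cdim, Finset.filter_true_of_mem fun k _ => hv k, Finset.card_univ, Fintype.card_fin]

/-- Every `i`-cell bounding a free cell of positive codimension is free: a voxel of `D`, and a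
voxel outside `D`, bounded by the larger cell are bounded by the smaller one as well. -/
lemma mem_freeCells_of_bounds {n : ℕ} {D : Set (Fin n → ℤ)} (hvox : ∀ v ∈ D, IsVoxel v)
    {i j : ℕ} (hj : j < n) {e f : Fin n → ℤ} (hf : f ∈ FreeCells D j) (he : cdim e = i)
    (hef : Bounds e f) : e ∈ FreeCells D i := by
  obtain ⟨⟨hdim, hD⟩, hblock⟩ := hf
  refine ⟨⟨he, Or.inr ?_⟩, fun hsub => hblock fun v hv => hsub ⟨hv.1, hef.trans hv.2⟩⟩
  rcases hD with hD | ⟨v, hv, hfv⟩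
  · have := cdim_of_isVoxel (hvox f hD)
    omega
  · exact ⟨v, hv, hef.trans hfv⟩

/-- The finset of odd coordinates of a cell, i.e. the directions in which it extends. -/
def oddSet {n : ℕ} (c : Fin n → ℤ) : Finset (Fin n) :=
  Finset.univ.filter fun k => Odd (c k)

lemma mem_oddSet {n : ℕ} {c : Fin n → ℤ} {k : Fin n} : k ∈ oddSet c ↔ Odd (c k) := by
  simp [oddSet]

/-- The finset of cells bounding `f` whose set of odd coordinates is a given proper subset `T` of `oddSet f`: such a
cell agrees with `f` outside `oddSet f \ T` and moves by `±1` at the coordinates in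
`oddSet f \ T`. -/
def facesOver {n : ℕ} (f : Fin n → ℤ) (T : Finset (Fin n)) : Finset (Fin n → ℤ) :=
  Fintype.piFinset fun k => if k ∈ oddSet f \ T then {f k - 1, f k + 1} else {f k}

lemma card_facesOver {n : ℕ} (f : Fin n → ℤ) (T : Finset (Fin n)) :
    (facesOver f T).card = 2 ^ (oddSet f \ T).card := by
  have h : ∀ k, (if k ∈ oddSet f \ T then ({f k - 1, f k + 1} : Finset ℤ) else {f k}).card
      = if k ∈ oddSet f \ T then 2 else 1 := fun k => by
    split_ifs
    · exact Finset.card_pair (by omega)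
    · simp
  rw [facesOver, Fintype.card_piFinset, Finset.prod_congr rfl fun k _ => h k,
    Finset.prod_ite_mem, Finset.univ_inter, Finset.prod_const]

lemma mem_facesOver {n : ℕ} {f : Fin n → ℤ} {T : Finset (Fin n)} (hT : T ⊆ oddSet f)
    (hcard : T.card < cdim f) (e : Fin n → ℤ) :
    e ∈ facesOver f T ↔ Bounds e f ∧ oddSet e = T := by
  simp only [facesOver, Fintype.mem_piFinset]
  constructor
  · intro h
    have key : oddSet e = T := by
      ext k
      have hk := h k
      have hTk := @hT k
      simp only [Finset.mem_sdiff, mem_oddSet] at hk hTk ⊢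
      split_ifs at hk with hc
      · obtain ⟨⟨a, ha⟩, hkT⟩ := hc
        simp only [Finset.mem_insert, Finset.mem_singleton] at hk
        simp only [hkT, iff_false, Int.not_odd_iff_even, Int.even_iff]
        omega
      · rw [Finset.mem_singleton] at hk
        rw [hk]
        tauto
    refine ⟨⟨?_, fun k => ?_⟩, key⟩
    · change (oddSet e).card < _
      rwa [key]
    · have hk := h k
      split_ifs at hk with hc
      · rw [Finset.mem_sdiff, mem_oddSet] at hc
        simp only [Finset.mem_insert, Finset.mem_singleton] at hk
        rcases hk with hk | hk <;> exact Or.inr ⟨hc.1, by rw [hk]; simp⟩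
      · exact Or.inl (Finset.mem_singleton.1 hk)
  · rintro ⟨hb, rfl⟩ k
    have hk := hb.2 k
    simp only [Finset.mem_sdiff, mem_oddSet]
    split_ifs with hc
    · rcases hk with hk | ⟨-, hk⟩
      · rw [hk] at hc
        exact absurd hc.1 hc.2
      · rcases abs_eq (zero_le_one) |>.1 hk with h5 | h5 <;>
          simp only [Finset.mem_insert, Finset.mem_singleton] <;> omega
    · rcases hk with hk | ⟨ho, hk⟩
      · simp [hk]
      · exfalso
        have he : Odd (e k) := by tauto
        obtain ⟨a, ha⟩ := he
        obtain ⟨b, hb⟩ := ho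
        rcases abs_eq (zero_le_one) |>.1 hk with h5 | h5 <;> omega

/-- A `j`-cell is bounded by exactly `2 ^ (j - i) * binom j i` cells of dimension `i < j`: the odd
coordinates of such a cell form an `i`-subset of those of `f`, and the `j - i` remaining ones each
admit two positions. -/
lemma card_faces {n i j : ℕ} (hij : i < j) {f : Fin n → ℤ} (hf : cdim f = j)
    (s : Finset (Fin n → ℤ)) (hs : ∀ e, e ∈ s ↔ cdim e = i ∧ Bounds e f) :
    s.card = 2 ^ (j - i) * Nat.choose j i := by
  have hf' : (oddSet f).card = j := hf
  have hmaps : ∀ e ∈ s, oddSet e ∈ (oddSet f).powersetCard i := fun e he => by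
    obtain ⟨hd, hb⟩ := (hs e).1 he
    refine Finset.mem_powersetCard.2 ⟨fun k hk => ?_, hd⟩
    rw [mem_oddSet] at hk ⊢
    rcases hb.2 k with h | ⟨h, -⟩
    · rwa [← h]
    · exact h
  have hfiber : ∀ T ∈ (oddSet f).powersetCard i,
      (s.filter fun e => oddSet e = T).card = 2 ^ (j - i) := fun T hT => by
    obtain ⟨hTS, hTc⟩ := Finset.mem_powersetCard.1 hT
    have : (s.filter fun e => oddSet e = T) = facesOver f T := by
      ext e
      rw [mem_facesOver hTS (by omega), Finset.mem_filter, hs]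
      refine ⟨fun h => ⟨h.1.2, h.2⟩, fun h => ⟨⟨?_, h.1⟩, h.2⟩⟩
      change (oddSet e).card = i
      rw [h.2, hTc]
    rw [this, card_facesOver, Finset.card_sdiff_of_subset hTS, hf', hTc]
  rw [Finset.card_eq_sum_card_fiberwise hmaps, Finset.sum_congr rfl hfiber, Finset.sum_const,
    Finset.card_powersetCard, hf', smul_eq_mul, mul_comm]

/-- For `i < j ≤ n-1`, `∑_{e ∈ bd_i(D)} b_j(e, D) = c_{i→j}·c*_j(D)`, where
`c_{i→j} = 2^(j-i)·C(j,i)` and the sum ranges over free `i`-cells of `D`. -/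
theorem sum_bcount (n : ℕ) (hn : 2 ≤ n) (D : Set (Fin n → ℤ))
    (hfin : D.Finite) (hvox : ∀ v ∈ D, IsVoxel v)
    (i j : ℕ) (hij : i < j) (hj : j ≤ n - 1) :
    ∑ᶠ e ∈ FreeCells D i, bcount e D j =
      2 ^ (j - i) * Nat.choose j i * cStar D j := by
  classical
  have hI := finite_freeCells hfin i
  have hJ := finite_freeCells hfin j
  have hb : ∀ e, bcount e D j = (hJ.toFinset.bipartiteAbove Bounds e).card := fun e => by
    rw [bcount, ← Set.ncard_coe_finset]
    congr 1
    ext f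
    simp [Finset.bipartiteAbove]
  rw [finsum_mem_eq_finite_toFinset_sum _ hI, Finset.sum_congr rfl fun e _ => hb e,
    Finset.sum_card_bipartiteAbove_eq_sum_card_bipartiteBelow, cStar,
    Set.ncard_eq_toFinset_card _ hJ, mul_comm, ← smul_eq_mul, ← Finset.sum_const]
  refine Finset.sum_congr rfl fun f hf => ?_
  rw [Set.Finite.mem_toFinset] at hf
  refine card_faces hij hf.1.1 _ fun e => ?_
  rw [Finset.bipartiteBelow, Finset.mem_filter, Set.Finite.mem_toFinset]
  exact ⟨fun h => ⟨h.1.1.1, h.2⟩,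
    fun h => ⟨mem_freeCells_of_bounds hvox (by omega) hf h.1 h.2, h.2⟩⟩

end DigitalGeometry
end
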